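/- Let T = {3124, 4123, 1243} (patterns of length 4). Then the generating function for T-avoiders satisfies, as formal power series over ℚ, x·(1-2x)^2·F_T(x) = (1 - 5x + 9x^2 - 8x^3 + 4x^4)·C(x) - (1 - 5x + 9x^2 - 6x^3 + x^4), where C(x) is the Catalan number generating function. -/

import Mathlib

open PowerSeries

/-- A permutation `π` of `{0,…,n-1}` contains the pattern `σ` (of length `k`) if there is an
order-embedding of positions on which the values of `π` appear in the same relative order as
the values of `σ`. -/
def ContainsPattern {n k : ℕ} (π : Equiv.Perm (Fin n)) (σ : Fin k → Fin k) : Prop :=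
  ∃ f : Fin k ↪o Fin n, ∀ a b : Fin k, σ a < σ b ↔ π (f a) < π (f b)

/-- The number of permutations of length `n` avoiding every pattern in `T`. -/
noncomputable def avoiderCount (T : Set (Fin 4 → Fin 4)) (n : ℕ) : ℕ :=
  Nat.card {π : Equiv.Perm (Fin n) // ∀ σ ∈ T, ¬ ContainsPattern π σ}

/-- The generating function `F_T(x) = ∑_n |S_n(T)| xⁿ` over `ℚ`. -/
noncomputable def avoiderGF (T : Set (Fin 4 → Fin 4)) : PowerSeries ℚ :=
  PowerSeries.mk fun n => (avoiderCount T n : ℚ)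

/-- The generating function of the Catalan numbers over `ℚ`. -/
noncomputable def catalanGF : PowerSeries ℚ :=
  PowerSeries.mk fun n => (catalan n : ℚ)

/-! ### Permutations and left insertion -/

def Av {n : ℕ} (π : Equiv.Perm (Fin n)) : Prop :=
  ∀ i j k l : Fin n, i < j → j < k → k < l →
    ¬ (π j < π k ∧ π k < π i ∧ π i < π l) ∧ ¬ (π j < π k ∧ π k < π l ∧ π l < π i) ∧
    ¬ (π i < π j ∧ π j < π l ∧ π l < π k)

lemma contains_of {n : ℕ} (π : Equiv.Perm (Fin n)) (σ : Fin 4 → Fin 4) (i j k l : Fin n)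
    (h1 : i < j) (h2 : j < k) (h3 : k < l)
    (h : ∀ a b : Fin 4, σ a < σ b ↔ π (![i,j,k,l] a) < π (![i,j,k,l] b)) :
    ContainsPattern π σ := by
  refine ⟨OrderEmbedding.ofStrictMono ![i,j,k,l] ?_, h⟩
  rw [Fin.strictMono_iff_lt_succ]
  intro a
  fin_cases a <;> simp [*]

lemma av_iff {n : ℕ} (π : Equiv.Perm (Fin n)) :
    (∀ σ ∈ ({![2,0,1,3], ![3,0,1,2], ![0,1,3,2]} : Set (Fin 4 → Fin 4)), ¬ ContainsPattern π σ)
      ↔ Av π := by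
  constructor
  · intro h i j k l h1 h2 h3
    refine ⟨?_, ?_, ?_⟩
    · rintro ⟨a, b, c⟩
      apply h ![2,0,1,3] (by simp)
      apply contains_of π _ i j k l h1 h2 h3
      intro p q
      fin_cases p <;> fin_cases q <;> simp <;> omega
    · rintro ⟨a, b, c⟩
      apply h ![3,0,1,2] (by simp)
      apply contains_of π _ i j k l h1 h2 h3
      intro p q
      fin_cases p <;> fin_cases q <;> simp <;> omega
    · rintro ⟨a, b, c⟩
      apply h ![0,1,3,2] (by simp)
      apply contains_of π _ i j k l h1 h2 h3
      intro p q
      fin_cases p <;> fin_cases q <;> simp <;> omega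
  · intro h σ hσ ⟨f, hf⟩
    have h1 : f 0 < f 1 := f.strictMono (by decide)
    have h2 : f 1 < f 2 := f.strictMono (by decide)
    have h3 : f 2 < f 3 := f.strictMono (by decide)
    obtain ⟨A, B, C⟩ := h _ _ _ _ h1 h2 h3
    simp only [Set.mem_insert_iff, Set.mem_singleton_iff] at hσ
    rcases hσ with rfl | rfl | rfl
    · exact A ⟨(hf 1 2).1 (by decide), (hf 2 0).1 (by decide), (hf 0 3).1 (by decide)⟩
    · exact B ⟨(hf 1 2).1 (by decide), (hf 2 3).1 (by decide), (hf 3 0).1 (by decide)⟩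
    · exact C ⟨(hf 0 1).1 (by decide), (hf 1 3).1 (by decide), (hf 3 2).1 (by decide)⟩

def pfun {n : ℕ} (v : Fin (n+1)) (π : Equiv.Perm (Fin n)) : Fin (n+1) → Fin (n+1) :=
  Fin.cons v (fun i => v.succAbove (π i))

lemma pfun_inj {n : ℕ} (v : Fin (n+1)) (π : Equiv.Perm (Fin n)) :
    Function.Injective (pfun v π) := by
  unfold pfun
  rw [Fin.cons_injective_iff]
  constructor
  · rintro ⟨i, hi⟩
    exact Fin.succAbove_ne v _ hi
  · intro i j h
    exact π.injective (Fin.succAbove_right_injective h)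

noncomputable def pcons {n : ℕ} (v : Fin (n+1)) (π : Equiv.Perm (Fin n)) : Equiv.Perm (Fin (n+1)) :=
  Equiv.ofBijective (pfun v π) (Finite.injective_iff_bijective.1 (pfun_inj v π))

lemma pcons_zero {n : ℕ} (v : Fin (n+1)) (π : Equiv.Perm (Fin n)) : pcons v π 0 = v := rfl
lemma pcons_succ {n : ℕ} (v : Fin (n+1)) (π : Equiv.Perm (Fin n)) (i : Fin n) :
    pcons v π i.succ = v.succAbove (π i) := rfl

lemma pcons_bij {n : ℕ} : Function.Bijective
    (fun p : Fin (n+1) × Equiv.Perm (Fin n) => pcons p.1 p.2) := by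
  rw [Fintype.bijective_iff_injective_and_card]
  constructor
  · rintro ⟨v, π⟩ ⟨w, ρ⟩ h
    simp only at h
    have h0 : v = w := by rw [← pcons_zero v π, h, pcons_zero]
    subst h0
    have : π = ρ := by
      ext i
      have := pcons_succ v π i
      rw [h, pcons_succ] at this
      rw [Fin.succAbove_right_injective this]
    rw [this]
  · simp [Fintype.card_perm, Nat.factorial_succ]

noncomputable def pe (n : ℕ) : Fin (n+1) × Equiv.Perm (Fin n) ≃ Equiv.Perm (Fin (n+1)) :=
  Equiv.ofBijective _ pcons_bij

/-- value of the new permutation -/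
lemma val_succ {n : ℕ} (v : Fin (n+1)) (π : Equiv.Perm (Fin n)) (i : Fin n) :
    (pcons v π i.succ : ℕ) = if (π i : ℕ) < v then (π i : ℕ) else π i + 1 := by
  rw [pcons_succ, Fin.succAbove]
  simp only [Fin.lt_def, Fin.val_castSucc]
  split_ifs <;> simp

def Fl {n : ℕ} (π : Equiv.Perm (Fin n)) (x : ℕ) : Prop :=
  ∃ i j, i < j ∧ (π i : ℕ) = x ∧ (π i : ℕ) < π j
def Dd {n : ℕ} (π : Equiv.Perm (Fin n)) (x : ℕ) : Prop :=
  ∃ i j, i < j ∧ (π j : ℕ) < π i ∧ x ≤ π j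
def Aa {n : ℕ} (π : Equiv.Perm (Fin n)) (x : ℕ) : Prop :=
  ∃ i j k, i < j ∧ j < k ∧ (π i : ℕ) < π k ∧ (π k : ℕ) < π j ∧ x ≤ π i
def Bb {n : ℕ} (π : Equiv.Perm (Fin n)) (x : ℕ) : Prop :=
  ∃ i j k, i < j ∧ j < k ∧ (π i : ℕ) < π j ∧ (π j : ℕ) < π k ∧ (π j : ℕ) < x

def sg (v x : ℕ) : ℕ := if x ≤ v then x else x - 1

lemma ex_cons {n : ℕ} (P : Fin (n+1) → Prop) : (∃ i, P i) ↔ P 0 ∨ ∃ i : Fin n, P i.succ :=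
  Fin.exists_fin_succ

lemma surj' {n : ℕ} (π : Equiv.Perm (Fin n)) (y : ℕ) (h : y < n) : ∃ i, (π i : ℕ) = y := by
  obtain ⟨i, hi⟩ := π.surjective ⟨y, h⟩
  exact ⟨i, by rw [hi]⟩

lemma Fl_cons {n : ℕ} (v : Fin (n+1)) (π : Equiv.Perm (Fin n)) (x : ℕ) :
    Fl (pcons v π) x ↔ (x = v ∧ (v : ℕ) < n) ∨ (x < v ∧ Fl π x) ∨ (v < x ∧ Fl π (x-1)) := by
  have hv := v.isLt
  unfold Fl
  constructor
  · rintro ⟨i, j, hij, h1, h2⟩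
    induction j using Fin.cases with
    | zero => exact absurd hij (by simp)
    | succ j =>
      rw [val_succ] at h2
      have := (π j).isLt
      induction i using Fin.cases with
      | zero => rw [pcons_zero] at h1 h2; left; split_ifs at h2 <;> omega
      | succ i =>
        rw [val_succ] at h1 h2
        rw [Fin.succ_lt_succ_iff] at hij
        right
        by_cases hx : (π i : ℕ) < v
        · left
          refine ⟨by split_ifs at * <;> omega, i, j, hij, by split_ifs at * <;> omega, by split_ifs at * <;> omega⟩
        · right
          refine ⟨by split_ifs at * <;> omega, i, j, hij, by split_ifs at * <;> omega, by split_ifs at * <;> omega⟩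
  · rintro (⟨rfl, h⟩ | ⟨h, i, j, hij, h1, h2⟩ | ⟨h, i, j, hij, h1, h2⟩)
    · obtain ⟨j, hj⟩ := surj' π v h
      refine ⟨0, j.succ, by simp, by rw [pcons_zero], ?_⟩
      rw [pcons_zero, val_succ]; split_ifs <;> omega
    · refine ⟨i.succ, j.succ, by simpa using hij, ?_, ?_⟩ <;> simp only [val_succ] <;> split_ifs <;> omega
    · refine ⟨i.succ, j.succ, by simpa using hij, ?_, ?_⟩ <;> simp only [val_succ] <;> split_ifs <;> omega

lemma Dd_cons {n : ℕ} (v : Fin (n+1)) (π : Equiv.Perm (Fin n)) (x : ℕ) :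
    Dd (pcons v π) x ↔ x < v ∨ Dd π (sg v x) := by
  have hv := v.isLt
  unfold Dd sg
  constructor
  · rintro ⟨i, j, hij, h1, h2⟩
    induction j using Fin.cases with
    | zero => exact absurd hij (by simp)
    | succ j =>
      rw [val_succ] at h1 h2
      induction i using Fin.cases with
      | zero => rw [pcons_zero] at h1; left; split_ifs at * <;> omega
      | succ i =>
        rw [val_succ] at h1
        rw [Fin.succ_lt_succ_iff] at hij
        right
        refine ⟨i, j, hij, ?_, ?_⟩ <;> split_ifs at * <;> omega
  · rintro (h | ⟨i, j, hij, h1, h2⟩)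
    · obtain ⟨j, hj⟩ := surj' π x (by omega)
      refine ⟨0, j.succ, by simp, ?_, ?_⟩ <;> simp only [pcons_zero, val_succ] <;> split_ifs <;> omega
    · refine ⟨i.succ, j.succ, by simpa using hij, ?_, ?_⟩ <;> simp only [val_succ] <;> split_ifs at * <;> omega

lemma Aa_cons {n : ℕ} (v : Fin (n+1)) (π : Equiv.Perm (Fin n)) (x : ℕ) :
    Aa (pcons v π) x ↔ Aa π (sg v x) ∨ (Dd π v ∧ x ≤ v) := by
  have hv := v.isLt
  unfold Dd Aa sg
  constructor
  · rintro ⟨i, j, k, hij, hjk, h1, h2, h3⟩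
    induction j using Fin.cases with
    | zero => exact absurd hij (by simp)
    | succ j =>
    induction k using Fin.cases with
    | zero => exact absurd hjk (by simp)
    | succ k =>
      rw [Fin.succ_lt_succ_iff] at hjk
      rw [val_succ] at h1 h2
      rw [val_succ] at h2
      induction i using Fin.cases with
      | zero =>
        rw [pcons_zero] at h1 h3; right
        refine ⟨⟨j, k, hjk, ?_, ?_⟩, h3⟩ <;> split_ifs at * <;> omega
      | succ i =>
        rw [val_succ] at h1 h3
        rw [Fin.succ_lt_succ_iff] at hij
        left
        refine ⟨i, j, k, hij, hjk, ?_, ?_, ?_⟩ <;> split_ifs at * <;> omega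
  · rintro (⟨i, j, k, hij, hjk, h1, h2, h3⟩ | ⟨⟨j, k, hjk, h1, h2⟩, h3⟩)
    · refine ⟨i.succ, j.succ, k.succ, by simpa using hij, by simpa using hjk, ?_, ?_, ?_⟩ <;>
        simp only [val_succ] <;> split_ifs at * <;> omega
    · refine ⟨0, j.succ, k.succ, by simp, by simpa using hjk, ?_, ?_, ?_⟩ <;>
        simp only [val_succ, pcons_zero] <;> (try split_ifs at *) <;> omega

lemma Bb_cons {n : ℕ} (v : Fin (n+1)) (π : Equiv.Perm (Fin n)) (x : ℕ) :
    Bb (pcons v π) x ↔ Bb π (sg v x) ∨ (∃ y, (v : ℕ) ≤ y ∧ Fl π y ∧ y + 1 < x) := by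
  have hv := v.isLt
  unfold Fl Bb sg
  constructor
  · rintro ⟨i, j, k, hij, hjk, h1, h2, h3⟩
    induction j using Fin.cases with
    | zero => exact absurd hij (by simp)
    | succ j =>
    induction k using Fin.cases with
    | zero => exact absurd hjk (by simp)
    | succ k =>
      rw [Fin.succ_lt_succ_iff] at hjk
      rw [val_succ] at h1 h2 h3
      rw [val_succ] at h2
      induction i using Fin.cases with
      | zero =>
        rw [pcons_zero] at h1; right
        refine ⟨π j, ?_, ⟨j, k, hjk, rfl, ?_⟩, ?_⟩ <;> split_ifs at * <;> omega
      | succ i =>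
        rw [val_succ] at h1
        rw [Fin.succ_lt_succ_iff] at hij
        left
        refine ⟨i, j, k, hij, hjk, ?_, ?_, ?_⟩ <;> split_ifs at * <;> omega
  · rintro (⟨i, j, k, hij, hjk, h1, h2, h3⟩ | ⟨y, h3, ⟨j, k, hjk, h1, h2⟩, h4⟩)
    · refine ⟨i.succ, j.succ, k.succ, by simpa using hij, by simpa using hjk, ?_, ?_, ?_⟩ <;>
        simp only [val_succ] <;> split_ifs at * <;> omega
    · refine ⟨0, j.succ, k.succ, by simp, by simpa using hjk, ?_, ?_, ?_⟩ <;>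
        simp only [val_succ, pcons_zero] <;> (try split_ifs at *) <;> omega

lemma Av_cons {n : ℕ} (v : Fin (n+1)) (π : Equiv.Perm (Fin n)) :
    Av (pcons v π) ↔ Av π ∧ ¬ Aa π v ∧ ¬ Bb π v := by
  have key : ∀ i j : Fin n, pcons v π i.succ < pcons v π j.succ ↔ π i < π j := by
    intro i j
    rw [Fin.lt_def, Fin.lt_def, val_succ, val_succ]; split_ifs <;> omega
  have k1 : ∀ i : Fin n, pcons v π 0 < pcons v π i.succ ↔ (v : ℕ) ≤ π i := by
    intro i
    rw [Fin.lt_def, pcons_zero, val_succ]; split_ifs <;> omega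
  have k2 : ∀ i : Fin n, pcons v π i.succ < pcons v π 0 ↔ (π i : ℕ) < v := by
    intro i
    rw [Fin.lt_def, pcons_zero, val_succ]; split_ifs <;> omega
  constructor
  · intro h
    refine ⟨?_, ?_, ?_⟩
    · intro i j k l h1 h2 h3
      have := h i.succ j.succ k.succ l.succ (by simpa using h1) (by simpa using h2) (by simpa using h3)
      simpa only [key] using this
    · rintro ⟨i, j, k, hij, hjk, h1, h2, h3⟩
      have := h 0 i.succ j.succ k.succ (by simp) (by simpa using hij) (by simpa using hjk)
      simp only [key, k1, k2] at this
      exact this.2.2 ⟨h3, h1, h2⟩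
    · rintro ⟨i, j, k, hij, hjk, h1, h2, h3⟩
      have := h 0 i.succ j.succ k.succ (by simp) (by simpa using hij) (by simpa using hjk)
      simp only [key, k1, k2] at this
      by_cases hk : (π k : ℕ) < v
      · exact this.2.1 ⟨h1, h2, hk⟩
      · exact this.1 ⟨h1, h3, by omega⟩
  · rintro ⟨h, hA, hB⟩ i j k l h1 h2 h3
    induction j using Fin.cases with
    | zero => exact absurd h1 (by simp)
    | succ j =>
    induction k using Fin.cases with
    | zero => exact absurd h2 (by simp)
    | succ k =>
    induction l using Fin.cases with
    | zero => exact absurd h3 (by simp)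
    | succ l =>
    rw [Fin.succ_lt_succ_iff] at h2 h3
    induction i using Fin.cases with
    | zero =>
      simp only [key, k1, k2]
      refine ⟨?_, ?_, ?_⟩
      · rintro ⟨a, b, c⟩
        exact hB ⟨j, k, l, h2, h3, a, by omega, b⟩
      · rintro ⟨a, b, c⟩
        exact hB ⟨j, k, l, h2, h3, a, b, by omega⟩
      · rintro ⟨a, b, c⟩
        exact hA ⟨j, k, l, h2, h3, b, c, a⟩
    | succ i =>
      rw [Fin.succ_lt_succ_iff] at h1
      simpa only [key] using h i j k l h1 h2 h3


/-! ### The state machine -/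

/-- one plus the index of the last true entry (zero when there is none) -/
def dc : List Bool → ℕ
  | [] => 0
  | b :: l => if dc l = 0 then (if b then 1 else 0) else dc l + 1

lemma dc_le : ∀ l : List Bool, dc l ≤ l.length
  | [] => le_rfl
  | b :: l => by
    have := dc_le l
    simp only [dc, List.length_cons]; split_ifs <;> omega

lemma dc_after : ∀ (l : List Bool) (i : ℕ) (h : i < l.length), dc l ≤ i → l[i] = false
  | [], i, h, _ => by simp at h
  | b :: l, 0, h, h1 => by
    simp only [dc] at h1
    cases b <;> (simp_all; try grind)
  | b :: l, i+1, h, h1 => by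
    simp only [List.getElem_cons_succ]
    apply dc_after
    simp only [dc] at h1; split_ifs at h1 <;> omega

lemma dc_at : ∀ (l : List Bool) (i : ℕ) (h : i < l.length), dc l = i + 1 → l[i] = true
  | [], i, h, _ => by simp at h
  | b :: l, 0, h, h1 => by
    simp only [dc] at h1
    cases b <;> (simp_all; try grind)
  | b :: l, i+1, h, h1 => by
    simp only [List.getElem_cons_succ]
    apply dc_at
    simp only [dc] at h1; split_ifs at h1 <;> omega

def stP (L : List Bool) (t : ℕ) (c : Bool) (i : ℕ) : List Bool :=
  if t ≤ i then L.take i else L.take i ++ (c || decide (0 < i)) :: L.drop i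
def stL (L : List Bool) (t : ℕ) (c : Bool) (i : ℕ) : List Bool :=
  (stP L t c i).drop (dc (L.take i))
def stT (L : List Bool) (t : ℕ) (i : ℕ) : ℕ := (if t ≤ i then t else i + 2) - dc (L.take i)
def stC (L : List Bool) (c : Bool) (i : ℕ) : Bool := c || decide (0 < dc (L.take i))

def N : ℕ → List Bool → ℕ → Bool → ℕ
  | 0, _, _, _ => 1
  | m+1, L, t, c => ∑ i ∈ Finset.range (L.length + 1), N m (stL L t c i) (stT L t i) (stC L c i)

structure PRep {n : ℕ} (π : Equiv.Perm (Fin n)) (L : List Bool) (t : ℕ) (c : Bool) (A B : ℕ) :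
    Prop where
  hB : B ≤ n
  hL : B = A + L.length
  hc : c = true ↔ B < n
  hA : ∀ x ≤ n, (Aa π x ↔ x < A)
  hBb : ∀ x ≤ n, (Bb π x ↔ B < x)
  hF : ∀ i (h : i < L.length), (L[i] = true ↔ Fl π (B - 1 - i))
  hD : ∀ i ≤ L.length, (Dd π (B - i) ↔ t ≤ i)

lemma PRep.step {n : ℕ} {π : Equiv.Perm (Fin n)} {L : List Bool} {t : ℕ} {c : Bool} {A B : ℕ}
    (R : PRep π L t c A B) (i : ℕ) (hi : i ≤ L.length) (v : Fin (n+1)) (hv : (v : ℕ) = B - i) :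
    PRep (pcons v π) (stL L t c i) (stT L t i) (stC L c i) (if t ≤ i then v + 1 else A)
      (B + 1 - dc (L.take i)) := by
  obtain ⟨hB, hL, hc, hA, hBb, hF, hD⟩ := R
  have hdl := dc_le (L.take i)
  have hlt : (L.take i).length = i := by simp [hi]
  have hda : ∀ (k : ℕ) (h : k < i), dc (L.take i) ≤ k → L[k] = false := by
    intro k h h1
    have := dc_after (L.take i) k (by omega) h1
    simpa using this
  have hdt : ∀ (k : ℕ) (h : k < i), dc (L.take i) = k + 1 → L[k] = true := by
    intro k h h1
    have := dc_at (L.take i) k (by omega) h1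
    simpa using this
  rw [hlt] at hdl
  have hlen : (stL L t c i).length = (if t ≤ i then i else L.length + 1) - dc (L.take i) := by
    unfold stL stP; split_ifs <;> simp <;> omega
  have hDi : Dd π v ↔ t ≤ i := by rw [hv]; exact hD i hi
  unfold stT stC
  set d := dc (L.take i) with hd
  refine ⟨by omega, ?_, ?_, ?_, ?_, ?_, ?_⟩
  · rw [hlen]; split_ifs <;> omega
  · cases c <;> simp at hc ⊢ <;> omega
  · intro x hx
    rw [Aa_cons, hDi]
    unfold sg
    split_ifs
    · rw [hA _ (by omega)]; omega
    · rw [hA _ (by omega)]; omega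
    · rw [hA _ (by omega)]; omega
    · rw [hA _ (by omega)]; omega
  · intro x hx
    rw [Bb_cons]
    have h1 : Bb π (sg v x) ↔ B < sg v x := hBb _ (by unfold sg; split_ifs <;> omega)
    rw [h1]
    constructor
    · rintro (h | ⟨y, h2, h3, h4⟩)
      · unfold sg at h; split_ifs at h <;> omega
      · by_cases hy : y < B
        · by_contra hcon
          have h5 := (hF (B - 1 - y) (by omega)).2 (by
            rwa [show B - 1 - (B - 1 - y) = y by omega])
          have h6 := hda (B - 1 - y) (by omega) (by omega)
          rw [h5] at h6; exact absurd h6 (by simp)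
        · omega
    · intro h
      by_cases hd0 : d = 0
      · left; unfold sg; split_ifs <;> omega
      · right
        refine ⟨B - d, by omega, ?_, by omega⟩
        have h5 := hdt (d-1) (by omega) (by omega)
        have h6 := (hF (d-1) (by omega)).1 h5
        rwa [show B - 1 - (d-1) = B - d by omega] at h6
  · intro k hk
    rw [hlen] at hk
    obtain ⟨q, hq⟩ : ∃ q, q = d + k := ⟨_, rfl⟩
    have e1 : ∀ h, (stL L t c i)[k]'h = (stP L t c i)[q]'(by
        unfold stL at h; simp only [List.length_drop] at h; omega) := by
      intro h; subst hq; simp only [stL, List.getElem_drop]; rfl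
    rw [e1]
    rw [show B + 1 - d - 1 - k = B - q by omega]
    have hqL : q < if t ≤ i then i else L.length + 1 := by split_ifs at * <;> omega
    rw [Fl_cons]
    rcases lt_trichotomy q i with h | h | h
    · have : ∀ hq1, (stP L t c i)[q]'hq1 = L[q] := by
        intro h'
        by_cases ht : t ≤ i
        · simp only [stP, ht, if_true]; simp
        · simp only [stP, ht, if_false]
          rw [List.getElem_append_left (by rw [hlt]; exact h)]
          simp
      rw [this, hF q (by omega), show B - 1 - q = B - q - 1 by omega]
      constructor
      · intro h2; right; right; exact ⟨by omega, h2⟩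
      · rintro (h2 | h2 | h2)
        · omega
        · omega
        · exact h2.2
    · subst h
      have ht : ¬ t ≤ q := by intro ht; simp [ht] at hqL
      have : ∀ hq1, (stP L t c q)[q]'hq1 = (c || decide (0 < q)) := by
        intro h'
        simp only [stP, ht, if_false]
        rw [List.getElem_append_right (by rw [hlt])]
        simp [hlt]
      rw [this, ← hv]
      cases c <;> simp at hc ⊢ <;> omega
    · have ht : ¬ t ≤ i := by intro ht; simp [ht] at hqL; omega
      simp only [ht, if_false] at hqL
      have : ∀ hq1, (stP L t c i)[q]'hq1 = L[q-1] := by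
        intro h'
        simp only [stP, ht, if_false]
        rw [List.getElem_append_right (by rw [hlt]; omega)]
        simp only [hlt, List.getElem_cons]
        rw [dif_neg (by omega)]
        simp only [List.getElem_drop]
        congr 1; omega
      rw [this, hF (q-1) (by omega), show B - 1 - (q-1) = B - q by omega]
      constructor
      · intro h2; right; left; exact ⟨by omega, h2⟩
      · rintro (h2 | h2 | h2)
        · omega
        · exact h2.2
        · omega
  · intro k hk
    rw [hlen] at hk
    rw [Dd_cons, show B + 1 - d - k = B + 1 - (d + k) by omega]
    have hk' : d + k ≤ if t ≤ i then i else L.length + 1 := by split_ifs at * <;> omega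
    have : (if t ≤ i then t else i + 2) - d ≤ k ↔ (if t ≤ i then t else i + 2) ≤ d + k := by omega
    rw [this]
    generalize hq : d + k = q at *
    unfold sg
    by_cases h : q ≤ i
    · rw [if_neg (by omega), show B + 1 - q - 1 = B - q by omega, hD q (by omega)]
      split_ifs <;> omega
    · have hti : ¬ t ≤ i := by intro ht; simp [ht] at hk'; omega
      simp only [hti, if_false] at hk' ⊢
      rw [if_pos (by omega), show B + 1 - q = B - (q-1) by omega, hD (q-1) (by omega)]
      omega

open Classical in
noncomputable def E : (m : ℕ) → {n : ℕ} → Equiv.Perm (Fin n) → ℕ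
  | 0, _, _ => 1
  | m+1, n, π => ∑ v : Fin (n+1), if Av (pcons v π) then E m (pcons v π) else 0

lemma E_eq_N (m : ℕ) : ∀ {n : ℕ} (π : Equiv.Perm (Fin n)) (L : List Bool) (t : ℕ) (c : Bool)
    (A B : ℕ), Av π → PRep π L t c A B → E m π = N m L t c := by
  induction m with
  | zero => intros; rfl
  | succ m ih =>
    intro n π L t c A B hπ R
    have hB := R.hB
    have hL := R.hL
    have hav : ∀ v : Fin (n+1), Av (pcons v π) ↔ A ≤ v ∧ (v : ℕ) ≤ B := by
      intro v
      rw [Av_cons, R.hA v (by omega), R.hBb v (by omega)]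
      simp [hπ]
    rw [E, N, ← Finset.sum_filter]
    symm
    refine Finset.sum_bij (fun i hi => (⟨B - i, by omega⟩ : Fin (n+1))) ?_ ?_ ?_ ?_
    · intro i hi
      rw [Finset.mem_range] at hi
      simp only [Finset.mem_filter, Finset.mem_univ, true_and, hav]
      omega
    · intro i hi j hj h
      rw [Finset.mem_range] at hi hj
      simp only [Fin.mk.injEq] at h
      omega
    · intro v hv
      simp only [Finset.mem_filter, Finset.mem_univ, true_and, hav] at hv
      refine ⟨B - v, by rw [Finset.mem_range]; omega, ?_⟩
      ext; simp only; omega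
    · intro i hi
      rw [Finset.mem_range] at hi
      symm
      refine ih _ _ _ _ _ _ ?_ (R.step i (by omega) _ rfl)
      rw [hav]; simp only; omega

open Classical in
lemma T_step (n m : ℕ) : (∑ π : Equiv.Perm (Fin n), if Av π then E (m+1) π else 0) =
    ∑ π : Equiv.Perm (Fin (n+1)), if Av π then E m π else 0 := by
  rw [← (pe n).sum_comp, Fintype.sum_prod_type, Finset.sum_comm]
  apply Finset.sum_congr rfl
  intro π _
  change _ = ∑ v, if Av (pcons v π) then E m (pcons v π) else 0
  split_ifs with h
  · rfl
  · symm; apply Finset.sum_eq_zero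
    intro v _
    rw [if_neg]
    rw [Av_cons]; tauto

open Classical in
lemma T_all (n : ℕ) : ∀ m, (∑ π : Equiv.Perm (Fin n), if Av π then E m π else 0) =
    ∑ π : Equiv.Perm (Fin 0), if Av π then E (n+m) π else 0 := by
  induction n with
  | zero => intro m; simp
  | succ n ih => intro m; rw [← T_step, ih]; congr! 3; omega

lemma avoiderCount_eq (n : ℕ) :
    avoiderCount ({![2,0,1,3], ![3,0,1,2], ![0,1,3,2]} : Set (Fin 4 → Fin 4)) n = N n [] 2 false := by
  classical
  unfold avoiderCount
  simp only [av_iff]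
  have h := T_all n 0
  have h1 : Av (1 : Equiv.Perm (Fin 0)) := fun i => i.elim0
  rw [show (∑ π : Equiv.Perm (Fin 0), if Av π then E (n+0) π else 0) = E n (1 : Equiv.Perm (Fin 0)) by
    rw [Fintype.sum_eq_single 1 (fun x hx => absurd (Subsingleton.elim x 1) hx)]
    simp [h1]] at h
  rw [E_eq_N n 1 [] 2 false 0 0 h1] at h
  · rw [← h, Nat.card_eq_fintype_card, Fintype.card_subtype, Finset.card_filter]
    rfl
  · refine ⟨le_rfl, rfl, by simp, ?_, ?_, ?_, ?_⟩
    · intro x _; simp [Aa]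
    · intro x _; simp [Bb]; omega
    · intro i h; simp at h
    · intro i h; simp [Dd] at h ⊢; omega

/-! ### Counting -/

lemma dc_append (l₁ l₂ : List Bool) :
    dc (l₁ ++ l₂) = if dc l₂ = 0 then dc l₁ else l₁.length + dc l₂ := by
  induction l₁ with
  | nil => simp [dc]
  | cons b l ih =>
    simp only [List.cons_append, dc, ih, List.length_cons]
    grind

lemma dc_rep_false (n : ℕ) : dc (List.replicate n false) = 0 := by
  induction n with
  | zero => rfl
  | succ n ih => simp [List.replicate_succ, dc, ih]

lemma dc_true_cons (l : List Bool) : dc (true :: l) = dc l + 1 := by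
  simp only [dc]; split_ifs <;> simp_all

lemma dc_rep_true (n : ℕ) : dc (List.replicate n true) = n := by
  induction n with
  | zero => rfl
  | succ n ih => rw [List.replicate_succ, dc_true_cons, ih]

lemma drop_dc (l : List Bool) : l.drop (dc l) = List.replicate (l.length - dc l) false := by
  rw [List.eq_replicate_iff]
  refine ⟨by simp, ?_⟩
  intro b hb
  obtain ⟨i, hi, rfl⟩ := List.getElem_of_mem hb
  simp only [List.getElem_drop]
  apply dc_after
  omega

def ee (L : List Bool) (i : ℕ) : ℕ := i - dc (L.take i)

/-- children after a reset -/
lemma child (L : List Bool) (t : ℕ) (c : Bool) (i : ℕ) (hi : i ≤ L.length) (ht : t ≤ i) :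
    stL L t c i = List.replicate (ee L i) false ∧ stT L t i = t - dc (L.take i) := by
  unfold stL stP stT ee
  rw [if_pos ht, if_pos ht, drop_dc]
  simp [hi]

noncomputable def yy : ℚ⟦X⟧ := (1 - X)⁻¹
noncomputable def zz : ℚ⟦X⟧ := (1 - 2 * X)⁻¹

lemma hyy : yy * (1 - X) = 1 := by
  unfold yy
  exact PowerSeries.inv_mul_cancel _ (by simp)
lemma hzz : zz * (1 - 2 * X) = 1 := by
  unfold zz
  exact PowerSeries.inv_mul_cancel _ (by simp)

lemma coeff_step (m : ℕ) (g k : ℚ⟦X⟧) (h : g = 1 + X * k) :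
    coeff (m+1) g = coeff m k := by
  rw [h, map_add, coeff_succ_X_mul, coeff_one]; simp

lemma coeff_zero' (g k : ℚ⟦X⟧) (h : g = 1 + X * k) :
    coeff 0 g = 1 := by
  rw [h, map_add, coeff_zero_X_mul]; simp

lemma N_succ (m : ℕ) (L : List Bool) (t : ℕ) (c : Bool) : (N (m+1) L t c : ℚ) =
    ∑ i ∈ Finset.range (L.length + 1), (N m (stL L t c i) (stT L t i) (stC L c i) : ℚ) := by
  rw [N]; push_cast; rfl

lemma geom (r : ℕ) : yy ^ (r+1) = 1 + X * ∑ i ∈ Finset.range (r+1), yy ^ (i+1) := by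
  induction r with
  | zero => simp; linear_combination hyy
  | succ r ih =>
    rw [Finset.sum_range_succ, mul_add, ← add_assoc, ← ih]
    linear_combination yy^(r+1) * hyy

lemma N_Q (m : ℕ) : ∀ r : ℕ, (N m (List.replicate r false) 0 true : ℚ) = coeff m (yy ^ (r+1)) := by
  induction m with
  | zero => intro r; rw [coeff_zero' _ _ (geom r)]; simp [N]
  | succ m ih =>
    intro r
    rw [coeff_step m _ _ (geom r), N_succ, map_sum]
    simp only [List.length_replicate]
    apply Finset.sum_congr rfl
    intro i hi
    rw [Finset.mem_range] at hi
    obtain ⟨h1, h2⟩ := child (List.replicate r false) 0 true i (by simp; omega) (by omega)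
    rw [h1, h2]
    simp only [ee, List.take_replicate, dc_rep_false, stC]
    simpa using ih i

lemma N_f (m : ℕ) (L : List Bool) (t : ℕ) (c : Bool) (i : ℕ) (hi : i ≤ L.length)
    (ht : t ≤ dc (L.take i)) (h0 : 0 < t) :
    (N m (stL L t c i) (stT L t i) (stC L c i) : ℚ) = coeff m (yy ^ (ee L i + 1)) := by
  have := dc_le (L.take i)
  simp only [List.length_take] at this
  obtain ⟨h1, h2⟩ := child L t c i hi (by omega)
  rw [h1, h2, show t - dc (L.take i) = 0 by omega, stC,
    show (c || decide (0 < dc (L.take i))) = true by simp; right; omega, N_Q]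

noncomputable def ph (L : List Bool) : ℚ⟦X⟧ := ∑ i ∈ Finset.range L.length, yy ^ (ee L (i+1) + 1)

lemma ee_true_cons (M : List Bool) (i : ℕ) : ee (true :: M) (i+1) = ee M i := by
  unfold ee; rw [List.take_succ_cons, dc_true_cons]; omega

lemma ee_zero (M : List Bool) : ee M 0 = 0 := by simp [ee]

lemma ph_nil : ph [] = 0 := by simp [ph]

lemma ph_true (M : List Bool) : ph (true :: M) = yy + ph M := by
  unfold ph
  simp only [ee_true_cons]
  rw [List.length_cons, Finset.sum_range_succ', ee_zero]; ring

def Hd (T : List Bool) : Prop := T = [] ∨ ∃ M, T = true :: M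

lemma dc_take_pos (T : List Bool) (hT : Hd T) (k : ℕ) (hk : k < T.length) :
    0 < dc (T.take (k+1)) := by
  rcases hT with rfl | ⟨M, rfl⟩
  · simp at hk
  · rw [List.take_succ_cons, dc_true_cons]; omega

lemma take_app (P T : List Bool) (n k : ℕ) (h : n = P.length + k) :
    (P ++ T).take n = P ++ T.take k := by
  subst h; exact List.take_length_add_append k

lemma dc_app_pos (P T : List Bool) (hT : Hd T) (n k : ℕ) (hk : k < T.length)
    (hn : n = P.length + (k+1)) :
    dc ((P ++ T).take n) = P.length + dc (T.take (k+1)) := by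
  rw [take_app P T n (k+1) hn, dc_append, if_neg]
  have := dc_take_pos T hT k hk
  omega

lemma ee_app_pos (P T : List Bool) (hT : Hd T) (n k : ℕ) (hk : k < T.length)
    (hn : n = P.length + (k+1)) :
    ee (P ++ T) n = ee T (k+1) := by
  unfold ee
  rw [dc_app_pos P T hT n k hk hn]; omega

lemma take_rep (q i : ℕ) (T : List Bool) (h : i ≤ q) :
    (List.replicate q false ++ T).take i = List.replicate i false := by
  rw [List.take_append_of_le_length (by simpa using h), List.take_replicate, min_eq_left h]

noncomputable def DD (q : ℕ) : ℚ⟦X⟧ := ∑ i ∈ Finset.range q, yy ^ (i+2)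

lemma ph_rep (q : ℕ) (T : List Bool) (hT : Hd T) :
    ph (List.replicate q false ++ T) = DD q + ph T := by
  unfold ph DD
  rw [List.length_append, List.length_replicate, Finset.sum_range_add]
  congr 1
  · apply Finset.sum_congr rfl
    intro i hi
    rw [Finset.mem_range] at hi
    rw [ee, take_rep _ _ _ (by omega), dc_rep_false]; rfl
  · apply Finset.sum_congr rfl
    intro i hi
    rw [Finset.mem_range] at hi
    rw [ee_app_pos _ T hT _ i hi (by simp; omega)]

lemma XDD (q : ℕ) : X * DD q = yy ^ (q+1) - yy := by
  induction q with
  | zero => simp [DD]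
  | succ q ih =>
    rw [DD, Finset.sum_range_succ, ← DD, mul_add, ih]
    linear_combination -yy^(q+1) * hyy

/-! constants -/
noncomputable def be : ℚ⟦X⟧ := X * yy * zz
noncomputable def HH (s : ℕ) (p : ℚ⟦X⟧) : ℚ⟦X⟧ := zz * (1 + X * be + X * (p - yy)) + be * (s : ℚ⟦X⟧)
noncomputable def H20 : ℚ⟦X⟧ := HH 2 0
noncomputable def SS : ℚ⟦X⟧ := X * zz * (1 + yy + X^2 * yy * zz)
noncomputable def rh : ℚ⟦X⟧ := (1 - X) * zz
noncomputable def k1 : ℚ⟦X⟧ := (1 - 2 * X) * yy^2 * (1 + X * zz + X^2 * H20)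
noncomputable def gg (r : ℕ) : ℚ⟦X⟧ := k1 * rh^(r+1) - X * zz * yy^(r+1)
noncomputable def GG (q : ℕ) : ℚ⟦X⟧ := ∑ i ∈ Finset.range q, gg (i+1)
noncomputable def hh (q : ℕ) (p : ℚ⟦X⟧) : ℚ⟦X⟧ := yy * (1 + X * (HH 2 (DD q + p) + GG q + p))

lemma HH_eq (s : ℕ) (p : ℚ⟦X⟧) :
    HH (s+2) p = 1 + X * (HH (s+3) p + HH (s+2) p + (((s+1 : ℕ) : ℚ⟦X⟧) * yy + p)) := by
  have h1 := hyy
  have h2 := hzz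
  unfold HH be
  push_cast
  linear_combination (X^2 * yy * zz + 1 + X * p - X*yy + X * yy * (s + 2)) * h2

lemma XGG (q : ℕ) : X * GG q = (1 - X) * (gg q - yy) - X^2 * (H20 + zz * (yy^(q+1) - yy)) := by
  have h1 := hyy
  have h2 := hzz
  induction q with
  | zero =>
    simp only [GG, Finset.range_zero, Finset.sum_empty, gg, k1, rh]
    grind
  | succ q ih =>
    rw [GG, Finset.sum_range_succ, ← GG, mul_add, ih]
    simp only [gg]
    rw [pow_succ rh (q+1), pow_succ yy (q+1)]
    generalize rh^(q+1) = R
    generalize yy^(q+1) = Y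
    simp only [rh]
    linear_combination (-(k1*R*(1-X)))*h2 + X*zz*Y*h1

lemma hh_eq (q : ℕ) (p : ℚ⟦X⟧) :
    hh q p = 1 + X * (HH 2 (DD q + p) + hh q p + (GG q + p)) := by
  unfold hh
  linear_combination (1 + X * (HH 2 (DD q + p) + GG q + p)) * hyy

lemma gg_eq (r : ℕ) : gg r = 1 + X * (hh r 0 + GG r) := by
  have h1 := hyy
  have h2 := hzz
  have h3 := XGG r
  have h4 := XDD r
  unfold hh
  have h5 : HH 2 (DD r + 0) = H20 + zz * (X * DD r) := by unfold H20 HH; ring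
  rw [h5, h4]
  generalize hG : GG r = G at *
  generalize H20 = H at *
  generalize gg r = g at *
  generalize yy^(r+1) = Y at *
  linear_combination (-1 - X * yy) * h3 +
    (1 - (g-yy) + (1-X)*(g-yy) - X^2*(H + zz*(Y-yy))) * h1

lemma sum_split (f : ℕ → ℚ) (a b : ℕ) : ∑ i ∈ Finset.range (2 + a + b), f i =
    f 0 + f 1 + ∑ i ∈ Finset.range a, f (2 + i) + ∑ i ∈ Finset.range b, f (2 + a + i) := by
  rw [Finset.sum_range_add, Finset.sum_range_add]
  simp [Finset.sum_range_succ]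

lemma coeff4 (m : ℕ) (a b c d : ℚ⟦X⟧) : coeff m (a + b + (c + d)) =
    coeff m a + coeff m b + coeff m c + coeff m d := by
  simp only [map_add]; ring

lemma N_R2 (m : ℕ) : ∀ (s : ℕ) (M : List Bool),
    (N m (List.replicate (s+2) true ++ M) 2 true : ℚ) = coeff m (HH (s+2) (ph M)) := by
  induction m with
  | zero => intro s M; rw [coeff_zero' _ _ (HH_eq s _)]; simp [N]
  | succ m ih =>
    intro s M
    rw [coeff_step m _ _ (HH_eq s _), N_succ]
    rw [show (List.replicate (s+2) true ++ M).length + 1 = 2 + (s+1) + M.length by simp; omega,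
      sum_split, coeff4]
    congr 1
    · congr 1
      · congr 1
        · have := ih (s+1) M
          rw [← this]; congr 1
        · rw [← ih s M]; congr 1
      · rw [← nsmul_eq_mul, map_nsmul, Finset.sum_congr rfl (g := fun _ => coeff m yy)]
        · simp
        · intro i hi
          rw [Finset.mem_range] at hi
          have hd : dc (List.take (2+i) (List.replicate (s+2) true ++ M)) = 2 + i := by
            rw [List.take_append_of_le_length (by simp; omega), List.take_replicate,
              min_eq_left (by omega), dc_rep_true]
          rw [N_f _ _ _ _ _ (by simp; omega) (by omega) (by omega), ee, hd]; simp
    · rw [ph, map_sum]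
      apply Finset.sum_congr rfl
      intro i hi
      rw [Finset.mem_range] at hi
      have hd : dc (List.take (2+(s+1)+i) (List.replicate (s+2) true ++ M))
          = s + 2 + dc (M.take (i+1)) := by
        rw [take_app _ _ _ (i+1) (by simp; omega), dc_append, dc_rep_true]
        simp only [List.length_replicate]; split_ifs <;> omega
      rw [N_f _ _ _ _ _ (by simp; omega) (by omega) (by omega), ee, hd, ee]
      congr 3; omega

lemma N_R1 (m : ℕ) : (∀ (q : ℕ) (T : List Bool), Hd T →
    (N m (true :: (List.replicate q false ++ T)) 2 true : ℚ) = coeff m (hh q (ph T))) ∧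
    (∀ r : ℕ, (N m (List.replicate r false) 1 true : ℚ) = coeff m (gg r)) := by
  induction m with
  | zero =>
    constructor
    · intro q T _; rw [coeff_zero' _ _ (hh_eq q _)]; simp [N]
    · intro q; rw [coeff_zero' _ _ (gg_eq q)]; simp [N]
  | succ m ih =>
    obtain ⟨ih1, ih0⟩ := ih
    constructor
    · intro q T hT
      rw [coeff_step m _ _ (hh_eq q _), N_succ]
      rw [show (true :: (List.replicate q false ++ T)).length + 1 = 2 + q + T.length by simp; omega,
        sum_split, coeff4]
      congr 1
      · congr 1
        · congr 1
          · have := N_R2 m 0 (List.replicate q false ++ T)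
            rw [ph_rep q T hT] at this
            rw [← this]; congr 1
          · rw [← ih1 q T hT]; congr 1
        · rw [GG, map_sum]
          apply Finset.sum_congr rfl
          intro i hi
          rw [Finset.mem_range] at hi
          have hd : dc (List.take (2+i) (true :: (List.replicate q false ++ T))) = 1 := by
            rw [show 2 + i = (i+1)+1 by omega, List.take_succ_cons, dc_true_cons,
              take_rep _ _ _ (by omega), dc_rep_false]
          obtain ⟨h1, h2⟩ := child (true :: (List.replicate q false ++ T)) 2 true (2+i)
            (by simp; omega) (by omega)
          rw [h1, h2, ← ih0 (i+1), ee, hd, show 2 + i - 1 = i + 1 by omega]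
          rfl
      · rw [ph, map_sum]
        apply Finset.sum_congr rfl
        intro i hi
        rw [Finset.mem_range] at hi
        have := dc_take_pos T hT i hi
        have hd : dc (List.take (2+q+i) (true :: (List.replicate q false ++ T)))
            = 1 + q + dc (T.take (i+1)) := by
          rw [show 2 + q + i = (q + (i+1)) + 1 by omega, List.take_succ_cons, dc_true_cons,
            dc_app_pos _ T hT _ i hi (by simp)]
          simp; omega
        rw [N_f _ _ _ _ _ (by simp; omega) (by omega) (by omega), ee, hd, ee]
        congr 3; omega
    · intro r
      rw [coeff_step m _ _ (gg_eq r), N_succ, List.length_replicate, Finset.sum_range_succ',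
        map_add, add_comm]
      congr 1
      · have := ih1 r [] (Or.inl rfl)
        rw [ph_nil] at this
        rw [← this]; congr 1
        simp [stL, stP, stT, stC, dc]
      · rw [GG, map_sum]
        apply Finset.sum_congr rfl
        intro i hi
        rw [Finset.mem_range] at hi
        have hd : dc (List.take (i+1) (List.replicate r false)) = 0 := by
          rw [List.take_replicate, dc_rep_false]
        obtain ⟨h1, h2⟩ := child (List.replicate r false) 1 true (i+1)
            (by simp; omega) (by omega)
        rw [h1, h2, ← ih0 (i+1), ee, hd]
        rfl

lemma cat_eq : catalanGF = 1 + X * catalanGF^2 := by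
  ext n
  cases n with
  | zero => simp [catalanGF]
  | succ n =>
    rw [map_add, coeff_succ_X_mul, pow_two, coeff_mul, coeff_one]
    simp [catalanGF, catalan_succ']

noncomputable def vv : ℚ⟦X⟧ := X * (SS + 1)
noncomputable def vw : ℚ⟦X⟧ := X * (SS + yy + X^2 * yy * zz)
noncomputable def c1 : ℚ⟦X⟧ := X * (SS - X * zz)
noncomputable def c2 : ℚ⟦X⟧ := k1 * (1 - 2 * X)
noncomputable def Ga : ℚ⟦X⟧ := X + X^2 * (X * yy * SS + gg 0 - 1) + (1 - X) * (c1 + c2 * rh)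
  - X * (c1 * yy + c2 * rh^2)
noncomputable def uh (b : ℕ) : ℚ⟦X⟧ := Ga * catalanGF^(b+2) - c1 * yy^b - c2 * rh^(b+1)

lemma vv_add : vv + vw = SS := by
  have h1 := hyy
  have h2 := hzz
  unfold vv vw SS
  linear_combination -X * (1 + yy + X^2 * yy * zz) * h2

lemma cc_yy : constantCoeff yy = 1 := by
  have := congrArg constantCoeff hyy
  simpa using this
lemma cc_zz : constantCoeff zz = 1 := by
  have := congrArg constantCoeff hzz
  simpa using this
lemma cc_cat : constantCoeff catalanGF = 1 := by
  have := congrArg constantCoeff cat_eq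
  simpa using this

lemma uh_dvd (b : ℕ) : (X : ℚ⟦X⟧) ∣ uh b := by
  rw [PowerSeries.X_dvd_iff]
  simp [uh, Ga, c1, c2, rh, k1, gg, cc_yy, cc_zz, cc_cat]

noncomputable def ub (b : ℕ) : ℚ⟦X⟧ := (uh_dvd b).choose
lemma X_ub (b : ℕ) : X * ub b = uh b := (uh_dvd b).choose_spec.symm

noncomputable def w0 : ℚ⟦X⟧ := yy * (X * (ub 1 + SS * yy) + gg 0)
noncomputable def ww (q : ℕ) : ℚ⟦X⟧ := w0 + SS * (yy^(q+1) - yy) + gg q - gg 0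

lemma ww_eq (q : ℕ) (p : ℚ⟦X⟧) : ww q + vw * p = 1 + X * (ub 1 + vv * (yy + (DD q + p))
    + (ww 0 + vw * (yy + (DD q + p))) + hh q p + (GG q + p)) := by
  have h1 := hyy
  have h2 := hzz
  have h3 := gg_eq q
  have h4 := XDD q
  have h5 : hh q p = hh q 0 + yy * X * (zz * X * p + p) := by
    unfold hh HH; ring
  have h6 := vv_add
  have h7 : ww 0 = w0 := by simp [ww]
  rw [h7, h5]
  unfold ww
  have h8 : w0 * (1 - X) = X * (ub 1 + SS * yy) + gg 0 := by
    unfold w0; linear_combination (X * (ub 1 + SS * yy) + gg 0) * h1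
  have h9 : vw = X * (SS + yy + X^2 * yy * zz) := rfl
  linear_combination h3 + h8 - X * (yy + DD q + p) * h6 - SS * h4 + p * h9 + X * p * h1

lemma ub0_eq : ub 0 = 1 + X * (ub 1 + ww 0) := by
  have h1 := hyy
  have h7 : ww 0 = w0 := by simp [ww]
  apply mul_left_cancel₀ (X_ne_zero (R := ℚ))
  have e0 := X_ub 0
  have e1 := X_ub 1
  have h8 : w0 * (1 - X) = X * (ub 1 + SS * yy) + gg 0 := by
    unfold w0; linear_combination (X * (ub 1 + SS * yy) + gg 0) * h1
  have h9 : X * w0 = yy * (X * (uh 1 + X * SS * yy) + X * gg 0) := by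
    unfold w0; rw [← e1]; ring
  rw [h7, e0]
  have : X * (1 + X * (ub 1 + w0)) = X + X * uh 1 + X * (X * w0) := by rw [← e1]; ring
  rw [this, h9]
  have hG : Ga = X + X^2 * (X * yy * SS + gg 0 - 1) + (1 - X) * (c1 + c2 * rh)
      - X * (c1 * yy + c2 * rh^2) := rfl
  have hC := cat_eq
  have hu0 : uh 0 = Ga * catalanGF^2 - c1 - c2 * rh := by unfold uh; ring
  have hu1 : uh 1 = Ga * catalanGF^3 - c1 * yy - c2 * rh^2 := by unfold uh; ring
  have hC3 : (1 - X) * catalanGF^2 - X * catalanGF^3 = 1 := by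
    linear_combination (1 + catalanGF) * hC
  have key : (1 - X) * uh 0 = X + X * uh 1 + X^2 * (X * yy * SS + gg 0 - 1) := by
    rw [hu0, hu1]
    linear_combination Ga * hC3 + hG
  linear_combination yy * key - (uh 0 - X - X * uh 1) * h1

lemma uh_rec (b : ℕ) : uh (b+1) - uh b = X * uh (b+2) +
    X^2 * (SS * (yy^(b+2) - yy^(b+1)) + gg (b+1) - gg b) := by
  have h1 := hyy
  have h2 := hzz
  have hC := cat_eq
  unfold uh gg
  have e1 : rh ^ (b+3) = rh^2 * rh^(b+1) := by ring
  have e2 : rh ^ (b+2) = rh * rh^(b+1) := by ring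
  have e3 : yy ^ (b+2) = yy^2 * yy^b := by ring
  have e4 : yy ^ (b+1) = yy * yy^b := by ring
  have e5 : catalanGF ^ (b+3) = catalanGF * catalanGF^(b+2) := by ring
  have e6 : catalanGF ^ (b+4) = catalanGF^2 * catalanGF^(b+2) := by ring
  have r1 : rh - 1 = X * zz := by unfold rh; linear_combination h2
  have r2 : X * rh^2 - rh + 1 = X^3 * zz^2 := by
    have : rh = 1 + X * zz := by linear_combination r1
    rw [this]; linear_combination -X * h2
  have r3 : c2 * zz = k1 := by unfold c2; linear_combination k1 * h2
  have r4 : X * c1 = X^2 * (SS - X * zz) := by unfold c1; ring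
  rw [show b + 1 + 2 = b + 3 by ring, show b + 2 + 2 = b + 4 by ring,
    show b + 1 + 1 = b + 2 by ring, show b + 2 + 1 = b + 3 by ring, e1, e2, e3, e4, e5, e6]
  generalize rh^(b+1) = R
  generalize yy^b = Y
  generalize catalanGF^(b+2) = D
  generalize catalanGF = C at *
  generalize Ga = g
  linear_combination g * D * hC + c2 * R * r2 - X^2 * k1 * R * r1 + X^3 * zz * R * r3
    + (yy^2 - yy) * Y * r4 - c1 * Y * h1

lemma ub_eq (b : ℕ) : ub b = 1 + X * (ub (b+1) + ww b + ∑ i ∈ Finset.range b, ub (i+1)) := by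
  induction b with
  | zero => simpa using ub0_eq
  | succ b ih =>
    have h : ub (b+1) - ub b = X * (ub (b+2) + ww (b+1) - ww b) := by
      apply mul_left_cancel₀ (X_ne_zero (R := ℚ))
      have := uh_rec b
      rw [← X_ub, ← X_ub, ← X_ub] at this
      unfold ww
      linear_combination this
    rw [Finset.sum_range_succ]
    linear_combination ih + h

lemma p_eq (b : ℕ) (p : ℚ⟦X⟧) : ub b + vv * p = 1 + X * ((ub (b+1) + vv * p) + (ww b + vw * p) +
    ((∑ i ∈ Finset.range b, ub (i+1)) + p)) := by
  have h1 := ub_eq b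
  have h2 := vv_add
  have h3 : vv = X * (SS + 1) := rfl
  linear_combination h1 + p * h3 - X * p * h2

lemma sum_split3 (f : ℕ → ℚ) (a b : ℕ) : ∑ i ∈ Finset.range (3 + a + b), f i =
    f 0 + f 1 + f 2 + ∑ i ∈ Finset.range a, f (3 + i) + ∑ i ∈ Finset.range b, f (3 + a + i) := by
  rw [Finset.sum_range_add, Finset.sum_range_add]
  simp [Finset.sum_range_succ]

lemma coeff5 (m : ℕ) (a b c d e : ℚ⟦X⟧) : coeff m (a + b + c + (d + e)) =
    coeff m a + coeff m b + coeff m c + coeff m d + coeff m e := by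
  simp only [map_add]; ring

lemma N_P (m : ℕ) : (∀ (b : ℕ) (T : List Bool), Hd T →
    (N m (List.replicate (b+1) false ++ T) 2 false : ℚ) = coeff m (ub b + vv * ph T)) ∧
    (∀ (q : ℕ) (T : List Bool), Hd T →
    (N m (false :: true :: (List.replicate q false ++ T)) 3 false : ℚ)
      = coeff m (ww q + vw * ph T)) := by
  induction m with
  | zero =>
    constructor
    · intro b T _; rw [coeff_zero' _ _ (p_eq b _)]; simp [N]
    · intro q T _; rw [coeff_zero' _ _ (ww_eq q _)]; simp [N]
  | succ m ih =>
    obtain ⟨ih1, ih2⟩ := ih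
    constructor
    · intro b T hT
      rw [coeff_step m _ _ (p_eq b _), N_succ]
      rw [show (List.replicate (b+1) false ++ T).length + 1 = 2 + b + T.length by simp; omega,
        sum_split, coeff4]
      congr 1
      · congr 1
        · congr 1
          · rw [← ih1 (b+1) T hT]; congr 1
          · rw [← ih2 b T hT]; congr 1
        · rw [map_sum]
          apply Finset.sum_congr rfl
          intro i hi
          rw [Finset.mem_range] at hi
          have hd : dc (List.take (2+i) (List.replicate (b+1) false ++ T)) = 0 := by
            rw [take_rep _ _ _ (by omega), dc_rep_false]
          obtain ⟨h1, h2⟩ := child (List.replicate (b+1) false ++ T) 2 false (2+i)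
            (by simp; omega) (by omega)
          have h3 := ih1 (i+1) [] (Or.inl rfl)
          rw [ph_nil, mul_zero, add_zero, List.append_nil] at h3
          rw [h1, h2, ← h3, ee, hd, stC, hd, show 2 + i - 0 = i + 1 + 1 by omega]
          rfl
      · rw [ph, map_sum]
        apply Finset.sum_congr rfl
        intro i hi
        rw [Finset.mem_range] at hi
        have := dc_take_pos T hT i hi
        have hd : dc (List.take (2+b+i) (List.replicate (b+1) false ++ T))
            = b + 1 + dc (T.take (i+1)) := by
          rw [dc_app_pos _ T hT _ i hi (by simp; omega)]
          simp
        rw [N_f _ _ _ _ _ (by simp; omega) (by omega) (by omega), ee, hd, ee]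
        congr 3; omega
    · intro q T hT
      rw [coeff_step m _ _ (ww_eq q _), N_succ]
      rw [show (false :: true :: (List.replicate q false ++ T)).length + 1 = 3 + q + T.length by
        simp; omega, sum_split3, coeff5]
      have hT' : Hd (true :: (List.replicate q false ++ T)) := Or.inr ⟨_, rfl⟩
      have hp : ph (true :: (List.replicate q false ++ T)) = yy + (DD q + ph T) := by
        rw [ph_true, ph_rep q T hT]
      congr 1
      · congr 1
        · congr 1
          · congr 1
            · rw [← hp, ← ih1 1 _ hT']; congr 1
            · rw [← hp, ← ih2 0 _ hT']; congr 1
          · rw [← (N_R1 m).1 q T hT]; congr 1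
        · rw [GG, map_sum]
          apply Finset.sum_congr rfl
          intro i hi
          rw [Finset.mem_range] at hi
          have hd : dc (List.take (3+i) (false :: true :: (List.replicate q false ++ T))) = 2 := by
            rw [show 3 + i = (i+1)+1+1 by omega, List.take_succ_cons, List.take_succ_cons,
              take_rep _ _ _ (by omega), dc, dc_true_cons, dc_rep_false]
            rfl
          obtain ⟨h1, h2⟩ := child (false :: true :: (List.replicate q false ++ T)) 3 false (3+i)
            (by simp; omega) (by omega)
          rw [h1, h2, ← (N_R1 m).2 (i+1), ee, hd, stC, hd, show 3 + i - 2 = i + 1 by omega]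
          rfl
      · rw [ph, map_sum]
        apply Finset.sum_congr rfl
        intro i hi
        rw [Finset.mem_range] at hi
        have := dc_take_pos T hT i hi
        have hd : dc (List.take (3+q+i) (false :: true :: (List.replicate q false ++ T)))
            = 2 + q + dc (T.take (i+1)) := by
          have := dc_app_pos (false :: true :: List.replicate q false) T hT (3+q+i) i hi
            (by simp; omega)
          simp only [List.cons_append, List.length_cons, List.length_replicate] at this
          rw [this]; omega
        rw [N_f _ _ _ _ _ (by simp; omega) (by omega) (by omega), ee, hd, ee]
        congr 3; omega

lemma N_final (n : ℕ) : (N n [] 2 false : ℚ) = coeff n (1 + uh 0) := by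
  rw [← X_ub]
  cases n with
  | zero => rw [coeff_zero' _ _ rfl]; simp [N]
  | succ n =>
    rw [coeff_step n _ _ rfl, N_succ]
    have := (N_P n).1 0 [] (Or.inl rfl)
    rw [ph_nil, mul_zero, add_zero] at this
    rw [← this]
    simp [stL, stP, stT, stC, dc]

lemma fin_alg : X * (1-2*X)^2 * (1 + uh 0) =
    (1 - 5*X + 9*X^2 - 8*X^3 + 4*X^4) * catalanGF - (1 - 5*X + 9*X^2 - 6*X^3 + X^4) := by
  have h1 := hyy
  have h2 := hzz
  have hC := cat_eq
  have w2 : (zz * (1 - 2 * X))^2 = 1 := by rw [h2]; ring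
  have hz2 : 1 + X * zz = (1 - X) * zz := by linear_combination -h2
  have hz3 : 1 + X^2 * zz = (1 - X)^2 * zz := by linear_combination -h2
  have hH : H20 = (1 - X) * zz^2 := by
    have e1 : zz * (1 - X * yy) = yy := by
      linear_combination yy * h2 - zz * h1
    have e2 : H20 = yy * (1 + X * zz)^2 := by
      unfold H20 HH be
      push_cast
      linear_combination e1
    rw [e2, hz2]
    linear_combination (1 - X) * zz^2 * h1
  have hk : k1 = (1 - X) * zz := by
    unfold k1
    rw [hH]
    have e1 : 1 + X * zz + X^2 * ((1-X) * zz^2) = (1 - X)^3 * zz^2 := by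
      linear_combination hz2 + (1 - X) * zz * hz3
    rw [e1]
    linear_combination (1-X) * zz * (yy * (1 - X) + 1) * h1
      + (1 - X)^3 * yy^2 * zz * h2
  have hS : SS = X * zz + X * (1 - X) * zz^2 := by
    unfold SS
    linear_combination X * zz * yy * hz3 + X * (1-X) * zz^2 * h1
  have hc1 : c1 = X^2 * (1 - X) * zz^2 := by unfold c1; rw [hS]; ring
  have hc2 : c2 = 1 - X := by unfold c2; rw [hk]; linear_combination (1 - X) * h2
  have hg : X * yy * SS + gg 0 - 1 = X * zz^2 := by
    unfold gg rh
    rw [hS, hk]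
    linear_combination (X^2 * zz^2 - X * zz) * h1 + ((1-X) * zz + 1) * h2
  have hG : (1 - 2*X)^2 * Ga = 1 - 5*X + 9*X^2 - 8*X^3 + 4*X^4 := by
    unfold Ga
    rw [hg, hc1, hc2]
    unfold rh
    linear_combination (X^3 + X^2 * (1-X)^2 - X * (X^2 * (1-X) * yy + (1-X)^3)) * w2
      + (1-X)^3 * (1-2*X) * h2 - X^3 * h1
  have hu : uh 0 = Ga * catalanGF^2 - c1 - c2 * rh := by unfold uh; ring
  have hcc : (1-2*X)^2 * (c1 + c2 * rh) = (1-X) * (1 - 3*X+3*X^2) := by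
    rw [hc1, hc2]
    unfold rh
    linear_combination X^2 * (1-X) * w2 + (1-X)^2 * (1-2*X) * h2
  rw [hu]
  linear_combination (catalanGF - 1) * hG - X * hcc - (1-2*X)^2 * Ga * hC

lemma GF_eq : avoiderGF ({![2,0,1,3], ![3,0,1,2], ![0,1,3,2]} : Set (Fin 4 → Fin 4)) = 1 + uh 0 := by
  ext n
  rw [← N_final, avoiderGF, coeff_mk, avoiderCount_eq]

theorem statement_14 :
    (X : PowerSeries ℚ) * (1 - 2*X)^2 * avoiderGF ({![2,0,1,3], ![3,0,1,2], ![0,1,3,2]} : Set (Fin 4 → Fin 4)) =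
      (1 - 5*X + 9*X^2 - 8*X^3 + 4*X^4) * catalanGF - (1 - 5*X + 9*X^2 - 6*X^3 + X^4) := by
  rw [GF_eq]; exact fin_alg
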